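/- Let H be a 2-edge-connected undirected graph with a DFS tree T rooted at r, let e be a back-edge, and let u be a vertex different from r. Then {e,(u,p(u))} is a cut-pair of H if and only if e joins a descendant of u to a proper ancestor of u and e is the only back-edge joining a descendant of u to a proper ancestor of u. -/

import Mathlib

/-- A DFS tree of the graph `H`, rooted at `r`, given by a parent function:
it is a spanning tree (every vertex reaches the root by iterating the parent
function, and each non-root vertex is adjacent to its parent), and every edge
of `H` joins a vertex to one of its ancestors. -/
structure DFSTree {V : Type*} (H : SimpleGraph V) (r : V) where
  par : V → V
  par_root : par r = r
  reaches_root : ∀ v : V, ∃ n : ℕ, par^[n] v = r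
  par_adj : ∀ v : V, v ≠ r → H.Adj v (par v)
  edge_anc : ∀ x y : V, H.Adj x y → (∃ n : ℕ, par^[n] x = y) ∨ (∃ n : ℕ, par^[n] y = x)

namespace DFSTree

variable {V : Type*} {H : SimpleGraph V} {r : V} (T : DFSTree H r)

/-- `a` is an ancestor of `b` (every vertex is an ancestor of itself). -/
def Anc (a b : V) : Prop := ∃ n : ℕ, T.par^[n] b = a

/-- `a` is a proper ancestor of `b`. -/
def PAnc (a b : V) : Prop := T.Anc a b ∧ a ≠ b

/-- `(x,y)` is a back-edge: an edge of `H` from `x` to an ancestor `y` of `x`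
which is not the tree edge from `x` to its parent. -/
def BackEdge (x y : V) : Prop := H.Adj x y ∧ T.Anc y x ∧ T.par x ≠ y

/-- The set of descendants of `v` joined by a back-edge to a proper ancestor of `v`. -/
def MSet (v : V) : Set V := {x | T.Anc v x ∧ ∃ y, T.PAnc y v ∧ T.BackEdge x y}

/-- `m = M(v)`: `m` is the nearest common ancestor of all descendants of `v`
joined by a back-edge to a proper ancestor of `v`. -/
def IsM (v m : V) : Prop :=
  (∀ x ∈ T.MSet v, T.Anc m x) ∧ ∀ m' : V, (∀ x ∈ T.MSet v, T.Anc m' x) → T.Anc m' m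

/-- The set of descendants of `v` joined by a back-edge to a proper ancestor of `p(v)`. -/
def MpSet (v : V) : Set V := {x | T.Anc v x ∧ ∃ y, T.PAnc y (T.par v) ∧ T.BackEdge x y}

/-- `m = M_p(v)`: `m` is the nearest common ancestor of all descendants of `v`
joined by a back-edge to a proper ancestor of `p(v)`. -/
def IsMp (v m : V) : Prop :=
  (∀ x ∈ T.MpSet v, T.Anc m x) ∧ ∀ m' : V, (∀ x ∈ T.MpSet v, T.Anc m' x) → T.Anc m' m

/-- `h = high(v)`: `h` is the deepest proper ancestor of `v` joined by a
back-edge to a descendant of `v`. -/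
def IsHigh (v h : V) : Prop :=
  T.PAnc h v ∧ (∃ x, T.Anc v x ∧ T.BackEdge x h) ∧
    ∀ h' : V, T.PAnc h' v → (∃ x, T.Anc v x ∧ T.BackEdge x h') → T.Anc h' h

/-- `h = high_p(v)`: `h` is the deepest proper ancestor of `p(v)` joined by a
back-edge to a descendant of `v`. -/
def IsHighP (v h : V) : Prop :=
  T.PAnc h (T.par v) ∧ (∃ x, T.Anc v x ∧ T.BackEdge x h) ∧
    ∀ h' : V, T.PAnc h' (T.par v) → (∃ x, T.Anc v x ∧ T.BackEdge x h') → T.Anc h' h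

/-- `l = low(v)`: `l` is the proper ancestor of `v` nearest to the root joined
by a back-edge to a descendant of `v`. -/
def IsLow (v l : V) : Prop :=
  T.PAnc l v ∧ (∃ x, T.Anc v x ∧ T.BackEdge x l) ∧
    ∀ l' : V, T.PAnc l' v → (∃ x, T.Anc v x ∧ T.BackEdge x l') → T.Anc l l'

end DFSTree

/-- `{v, e}` is a vertex-edge cut-pair of `H`: `e` is an edge of `H` and deleting
both `v` (with its incident edges) and `e` disconnects `H`. -/
def VECutPair {V : Type*} (H : SimpleGraph V) (v : V) (e : Sym2 V) : Prop :=
  e ∈ H.edgeSet ∧ ¬ ((H.deleteEdges {e}).induce {u | u ≠ v}).Connected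

/-- `{e, e'}` is a cut-pair of `H`: `e` and `e'` are distinct edges of `H` whose
deletion disconnects `H`. -/
def ECutPair {V : Type*} (H : SimpleGraph V) (e e' : Sym2 V) : Prop :=
  e ∈ H.edgeSet ∧ e' ∈ H.edgeSet ∧ e ≠ e' ∧ ¬ (H.deleteEdges {e, e'}).Connected

/-- An undirected graph is 2-edge-connected if it is connected and has no bridge. -/
def TwoEdgeConnected {W : Type*} (G : SimpleGraph W) : Prop :=
  G.Connected ∧ ∀ e ∈ G.edgeSet, ¬ G.IsBridge e

/-- An undirected graph is 2-vertex-connected if it has at least three vertices,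
is connected, and deleting any single vertex leaves it connected. -/
def TwoVertexConnected {W : Type*} (G : SimpleGraph W) : Prop :=
  3 ≤ Nat.card W ∧ G.Connected ∧ ∀ v : W, (G.induce {u | u ≠ v}).Connected

/-!
Delete the tree edge from `u` to its parent together with a set `S` of non-tree edges. The
surviving tree edges still connect every descendant of `u` to `u` and every other vertex to the
root, so the rest of `H` is connected iff some surviving edge leaves the subtree of `u`. In a DFS
tree such an edge is a back-edge from a descendant of `u` to a proper ancestor of `u`. With
`S = ∅` this says that the tree edge is a bridge iff there is no such back-edge, and with
`S = {e}` that the two deletions disconnect `H` iff there is none besides `e`.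
-/

namespace DFSTree

variable {V : Type*} {H G : SimpleGraph V} {r u v a b c x y : V} {T : DFSTree H r}

theorem Anc.refl (T : DFSTree H r) (a : V) : T.Anc a a := ⟨0, rfl⟩

theorem par_anc (T : DFSTree H r) (v : V) : T.Anc (T.par v) v := ⟨1, rfl⟩

theorem Anc.trans (hab : T.Anc a b) (hbc : T.Anc b c) : T.Anc a c := by
  obtain ⟨m, rfl⟩ := hab
  obtain ⟨n, rfl⟩ := hbc
  exact ⟨m + n, Function.iterate_add_apply _ _ _ _⟩

theorem Anc.total (hac : T.Anc a c) (hbc : T.Anc b c) : T.Anc a b ∨ T.Anc b a := by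
  obtain ⟨m, rfl⟩ := hac
  obtain ⟨n, rfl⟩ := hbc
  obtain ⟨k, rfl⟩ | ⟨k, rfl⟩ := (le_total m n).imp Nat.exists_eq_add_of_le' Nat.exists_eq_add_of_le'
  · exact .inr ⟨k, (Function.iterate_add_apply _ _ _ _).symm⟩
  · exact .inl ⟨k, (Function.iterate_add_apply _ _ _ _).symm⟩

theorem Anc.eq_or_anc_par (h : T.Anc u v) : v = u ∨ T.Anc u (T.par v) := by
  obtain ⟨_ | n, hn⟩ := h
  · exact .inl hn
  · exact .inr ⟨n, hn⟩

theorem iterate_par_root (T : DFSTree H r) (n : ℕ) : T.par^[n] r = r :=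
  Function.iterate_fixed T.par_root n

theorem Anc.eq_root (h : T.Anc a r) : a = r := by
  obtain ⟨n, rfl⟩ := h
  exact T.iterate_par_root n

theorem eq_root_of_isPeriodicPt {n : ℕ} (hn : 0 < n)
    (hv : Function.IsPeriodicPt T.par n v) : v = r := by
  obtain ⟨N, hN⟩ := T.reaches_root v
  obtain ⟨k, hk⟩ := Nat.exists_eq_add_of_le' (Nat.le_mul_of_pos_left N hn)
  calc
    v = T.par^[n * N] v := (hv.mul_const N).eq.symm
    _ = T.par^[k] (T.par^[N] v) := by rw [hk, Function.iterate_add_apply]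
    _ = r := by rw [hN, T.iterate_par_root]

theorem Anc.antisymm (hab : T.Anc a b) (hba : T.Anc b a) : a = b := by
  obtain ⟨m, hm⟩ := hab
  obtain ⟨n, hn⟩ := hba
  rcases Nat.eq_zero_or_pos m with rfl | hm_pos
  · exact hm.symm
  · have hb_periodic : Function.IsPeriodicPt T.par (n + m) b := by
      rw [Function.IsPeriodicPt, Function.IsFixedPt, Function.iterate_add_apply, hm, hn]
    obtain rfl : b = r := eq_root_of_isPeriodicPt (Nat.add_pos_right n hm_pos) hb_periodic
    exact Anc.eq_root ⟨m, hm⟩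

theorem PAnc.not_anc (h : T.PAnc a b) : ¬ T.Anc b a := fun hba => h.2 (h.1.antisymm hba)

theorem eq_of_mk_par_eq_mk_par (h : s(u, T.par u) = s(v, T.par v)) : u = v := by
  rcases Sym2.eq_iff.mp h with ⟨huv, -⟩ | ⟨huv, hvu⟩
  · exact huv
  · exact Anc.antisymm ⟨1, huv.symm⟩ ⟨1, hvu⟩

theorem BackEdge.mk_par_ne (h : T.BackEdge x y) (v : V) : s(v, T.par v) ≠ s(x, y) := by
  intro heq
  rcases Sym2.eq_iff.mp heq with ⟨rfl, hpar⟩ | ⟨rfl, hpar⟩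
  · exact h.2.2 hpar
  · exact h.1.ne (Anc.antisymm ⟨1, hpar⟩ h.2.1)

theorem BackEdge.eq_and_eq_of_mk_eq (hab : T.BackEdge a b) (hxy : T.BackEdge x y)
    (h : s(a, b) = s(x, y)) : a = x ∧ b = y := by
  rcases Sym2.eq_iff.mp h with hsame | ⟨rfl, rfl⟩
  · exact hsame
  · exact absurd (hab.2.1.antisymm hxy.2.1) hxy.1.ne

/-- The back-edge `(x, y)` leaps over `u`: its lower end `x` is a descendant of `u` and its upper
end `y` is a proper ancestor of `u`. -/
def LeapsOver (T : DFSTree H r) (u x y : V) : Prop :=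
  T.BackEdge x y ∧ T.Anc u x ∧ T.PAnc y u

theorem mk_eq_mk_par_or_leapsOver (hadj : H.Adj a b) (ha : T.Anc u a) (hb : ¬ T.Anc u b) :
    s(a, b) = s(u, T.par u) ∨ T.LeapsOver u a b := by
  have hba : T.Anc b a := (T.edge_anc a b hadj).resolve_right fun hab => hb (ha.trans hab)
  by_cases hpar : T.par a = b
  · subst hpar
    obtain rfl : a = u := ha.eq_or_anc_par.resolve_right hb
    exact .inl rfl
  · have hbu : T.Anc b u := (ha.total hba).resolve_left hb
    have hne : b ≠ u := fun h => hb (h ▸ Anc.refl T b)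
    exact .inr ⟨⟨hadj, hba, hpar⟩, ha, hbu, hne⟩

theorem reachable_of_anc (hG : ∀ w, w ≠ u → G.Reachable w (T.par w)) (h : T.Anc u v) :
    G.Reachable v u := by
  obtain ⟨n, hn⟩ := h
  induction n generalizing v with
  | zero => exact hn ▸ .refl v
  | succ n ih =>
    rcases eq_or_ne v u with rfl | hvu
    · exact .refl v
    · exact (hG v hvu).trans (ih hn)

theorem reachable_root_of_not_anc (hG : ∀ w, w ≠ u → G.Reachable w (T.par w))
    (h : ¬ T.Anc u v) : G.Reachable v r := by
  obtain ⟨n, hn⟩ := T.reaches_root v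
  induction n generalizing v with
  | zero => exact hn ▸ .refl v
  | succ n ih =>
    have hvu : v ≠ u := fun hvu => h (hvu ▸ Anc.refl T v)
    exact (hG v hvu).trans (ih (fun hpar => h (hpar.trans (T.par_anc v))) hn)

theorem connected (T : DFSTree H r) : H.Connected :=
  SimpleGraph.connected_iff_exists_forall_reachable H |>.mpr ⟨r, fun v =>
    (reachable_of_anc (fun w hw => (T.par_adj w hw).reachable) (T.reaches_root v)).symm⟩

theorem connected_iff_exists_adj_anc_not_anc (hu : u ≠ r)
    (hG : ∀ w, w ≠ u → G.Reachable w (T.par w)) :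
    G.Connected ↔ ∃ a b, G.Adj a b ∧ T.Anc u a ∧ ¬ T.Anc u b := by
  constructor
  · intro hconn
    obtain ⟨p⟩ := hconn.preconnected u r
    obtain ⟨d, -, hfst, hsnd⟩ := p.exists_boundary_dart {v | T.Anc u v} (Anc.refl T u)
      fun hur => hu (Anc.eq_root hur)
    exact ⟨d.fst, d.snd, d.adj, hfst, hsnd⟩
  · rintro ⟨a, b, hadj, ha, hb⟩
    have hur : G.Reachable u r :=
      (reachable_of_anc hG ha).symm.trans (hadj.reachable.trans (reachable_root_of_not_anc hG hb))
    refine SimpleGraph.connected_iff_exists_forall_reachable G |>.mpr ⟨r, fun v => .symm ?_⟩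
    by_cases hv : T.Anc u v
    · exact (reachable_of_anc hG hv).trans hur
    · exact reachable_root_of_not_anc hG hv

section DeleteEdges

variable {S : Set (Sym2 V)}

theorem reachable_par_deleteEdges_insert (hS : ∀ w, w ≠ r → s(w, T.par w) ∉ S) (hvu : v ≠ u) :
    (H.deleteEdges (insert s(u, T.par u) S)).Reachable v (T.par v) := by
  rcases eq_or_ne v r with rfl | hvr
  · rw [T.par_root]
  · refine (SimpleGraph.deleteEdges_adj.mpr ⟨T.par_adj v hvr, ?_⟩).reachable
    rintro (heq | hmem)
    · exact hvu (eq_of_mk_par_eq_mk_par heq)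
    · exact hS v hvr hmem

theorem connected_deleteEdges_insert_iff (hu : u ≠ r) (hS : ∀ w, w ≠ r → s(w, T.par w) ∉ S) :
    (H.deleteEdges (insert s(u, T.par u) S)).Connected ↔
      ∃ a b, T.LeapsOver u a b ∧ s(a, b) ∉ S := by
  rw [connected_iff_exists_adj_anc_not_anc hu fun _ => reachable_par_deleteEdges_insert hS]
  simp only [SimpleGraph.deleteEdges_adj, Set.mem_insert_iff, not_or]
  refine exists₂_congr fun a b => ⟨?_, ?_⟩
  · rintro ⟨⟨hadj, hne, hmem⟩, ha, hb⟩
    exact ⟨(mk_eq_mk_par_or_leapsOver hadj ha hb).resolve_left hne, hmem⟩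
  · rintro ⟨⟨hback, ha, hb⟩, hmem⟩
    exact ⟨⟨hback.1, (hback.mk_par_ne u).symm, hmem⟩, ha, hb.not_anc⟩

end DeleteEdges

theorem exists_leapsOver_of_not_isBridge (hu : u ≠ r) (h : ¬ H.IsBridge s(u, T.par u)) :
    ∃ a b, T.LeapsOver u a b := by
  have hconn := T.connected.connected_delete_edge_of_not_isBridge h
  rw [← insert_empty_eq, connected_deleteEdges_insert_iff hu (by simp)] at hconn
  simpa using hconn

theorem eCutPair_iff_forall_leapsOver (hu : u ≠ r) (hxy : T.BackEdge x y) :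
    ECutPair H s(x, y) s(u, T.par u) ↔ ∀ a b, T.LeapsOver u a b → s(a, b) = s(x, y) := by
  have hedge : s(x, y) ∈ H.edgeSet := hxy.1
  have htree : s(u, T.par u) ∈ H.edgeSet := T.par_adj u hu
  rw [ECutPair, Set.pair_comm, connected_deleteEdges_insert_iff hu fun w _ => hxy.mk_par_ne w]
  simp only [hedge, htree, ne_eq, (hxy.mk_par_ne u).symm, not_false_eq_true, true_and,
    Set.mem_singleton_iff, not_exists, not_and, not_not]

end DFSTree

theorem stmt_16_general {V : Type*} (H : SimpleGraph V) (r : V)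
    (T : DFSTree H r) (x y u : V) (hbridge : ¬ H.IsBridge s(u, T.par u))
    (hbe : T.BackEdge x y) (hu : u ≠ r) :
    ECutPair H s(x, y) s(u, T.par u) ↔
      (T.Anc u x ∧ T.PAnc y u ∧
        ∀ x' y' : V, T.BackEdge x' y' → T.Anc u x' → T.PAnc y' u →
          s(x', y') = s(x, y)) := by
  rw [DFSTree.eCutPair_iff_forall_leapsOver hu hbe]
  constructor
  · intro hunique
    obtain ⟨a, b, hab⟩ := DFSTree.exists_leapsOver_of_not_isBridge hu hbridge
    obtain ⟨rfl, rfl⟩ := hab.1.eq_and_eq_of_mk_eq hbe (hunique a b hab)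
    exact ⟨hab.2.1, hab.2.2, fun x' y' hback hx' hy' => hunique x' y' ⟨hback, hx', hy'⟩⟩
  · rintro ⟨-, -, hunique⟩ a b ⟨hback, ha, hb⟩
    exact hunique a b hback ha hb

theorem stmt_16 {V : Type*} [Fintype V] (H : SimpleGraph V) (r : V)
    (T : DFSTree H r) (hH : TwoEdgeConnected H) (x y u : V)
    (hbe : T.BackEdge x y) (hu : u ≠ r) :
    ECutPair H s(x, y) s(u, T.par u) ↔
      (T.Anc u x ∧ T.PAnc y u ∧
        ∀ x' y' : V, T.BackEdge x' y' → T.Anc u x' → T.PAnc y' u →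
          s(x', y') = s(x, y)) :=
  stmt_16_general H r T x y u (hH.2 _ (T.par_adj u hu)) hbe hu
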